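/- Forward-completeness of the exact prophecy annotation: Let A = (Q, q0, δ, safe(F)) be a deterministic safety automaton over Σ with exact prophecy annotation κ*. If M_p ∈ κ*(q, α) for some plant M_p ∈ ℙ, state q ∈ Q, and output α ⊆ O_c, then there exists a controller M_c ∈ ℂ such that M_c ⊨ (A(q), κ*) ∥ M_p, where A(q) denotes A with initial state q; in other words, the prophecy-annotated controller (A, κ*) is forward-complete. -/

import Mathlib

/-- A Moore machine over atomic propositions `AP`, with input propositions `I ⊆ AP`
and output propositions `O ⊆ AP`.  Letters in `2^I` are encoded as sets `σ : Set AP`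
where the transition function is invariant under intersecting with `I`, and the
output labeling produces subsets of `O`. -/
structure Moore (AP : Type) (I O : Set AP) : Type 1 where
  S : Type
  fin : Finite S
  s0 : S
  tr : S → Set AP → S
  out : S → Set AP
  tr_inv : ∀ s σ, tr s σ = tr s (σ ∩ I)
  out_sub : ∀ s, out s ⊆ O

namespace Moore

variable {AP : Type} {I O : Set AP}

/-- `M.at' s` is `M` with initial state replaced by `s` (written `M(s)` in the paper). -/
def at' (M : Moore AP I O) (s : M.S) : Moore AP I O :=
  { M with s0 := s }

/-- The run of `M` on an infinite word `γ`: at step `j` the machine reads input `γ j ∩ I`. -/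
def run (M : Moore AP I O) (γ : ℕ → Set AP) : ℕ → M.S
  | 0 => M.s0
  | j + 1 => M.tr (M.run γ j) (γ j ∩ I)

/-- `Traces(M)`: all `γ` whose `O`-component agrees with the outputs along the run of `M`. -/
def Traces (M : Moore AP I O) : Set (ℕ → Set AP) :=
  { γ | ∀ j, γ j ∩ O = M.out (M.run γ j) }

end Moore

/-- Parallel composition `M1 ∥ M2` of Moore machines of two distinct processes. -/
def par {AP : Type} {I1 O1 I2 O2 : Set AP} (M1 : Moore AP I1 O1) (M2 : Moore AP I2 O2) :
    Moore AP ((I1 ∪ I2) \ (O1 ∪ O2)) (O1 ∪ O2) where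
  S := M1.S × M2.S
  fin := by haveI := M1.fin; haveI := M2.fin; exact inferInstance
  s0 := (M1.s0, M2.s0)
  tr p σ :=
    (M1.tr p.1 ((σ ∩ ((I1 ∪ I2) \ (O1 ∪ O2)) ∪ M2.out p.2) ∩ I1),
     M2.tr p.2 ((σ ∩ ((I1 ∪ I2) \ (O1 ∪ O2)) ∪ M1.out p.1) ∩ I2))
  out p := M1.out p.1 ∪ M2.out p.2
  tr_inv := by intro s σ; simp [Set.inter_assoc]
  out_sub p := Set.union_subset_union (M1.out_sub p.1) (M2.out_sub p.2)

/-- A deterministic safety automaton `A = (Q, q0, δ, safe(F))` over alphabet `2^AP`. -/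
structure DSA (AP : Type) : Type 1 where
  Q : Type
  fin : Finite Q
  q0 : Q
  δ : Q → Set AP → Q
  F : Set Q

namespace DSA

variable {AP : Type}

/-- The run of `A` from state `q` on the infinite word `γ`. -/
def run (A : DSA AP) (q : A.Q) (γ : ℕ → Set AP) : ℕ → A.Q
  | 0 => q
  | i + 1 => A.δ (A.run q γ i) (γ i)

/-- `L(A)`: all words whose run from `q0` stays in the safe states `F`. -/
def Lang (A : DSA AP) : Set (ℕ → Set AP) :=
  { γ | ∀ i, A.run A.q0 γ i ∈ A.F }

end DSA

/-- `Runs(A, q, M) ⊆ safe(F)`: every run of `A` from `q` on a trace of `M` stays in `F`. -/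
def SafeRuns {AP : Type} {I O : Set AP} (A : DSA AP) (q : A.Q) (M : Moore AP I O) : Prop :=
  ∀ γ ∈ M.Traces, ∀ i, A.run q γ i ∈ A.F

/-- `M_c ⊨ (A(q), κ) ∥ M_p`: the controller `M_c` is consistent with the
prophecy-annotated controller `(A(q), κ)` w.r.t. the plant `M_p`: at every
reachable triple of the product of `A` (started at `q`) with `M_c ∥ M_p`,
the residual plant satisfies the prophecy for the current controller output. -/
def Consistent {AP : Type} (Oe Oc Op : Set AP) (A : DSA AP) (q : A.Q)
    (κ : A.Q → Set AP → Set (Moore AP (Oe ∪ Oc) Op))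
    (Mc : Moore AP (Oe ∪ Op) Oc) (Mp : Moore AP (Oe ∪ Oc) Op) : Prop :=
  ∀ γ ∈ (par Mc Mp).Traces, ∀ i,
    Mp.at' ((par Mc Mp).run γ i).2 ∈
      κ (A.run q γ i) (Mc.out ((par Mc Mp).run γ i).1)

/-- `(A, κ)` is correct for the plant `M_p` w.r.t. the specification `φ`. -/
def CorrectFor {AP : Type} (Oe Oc Op : Set AP) (A : DSA AP)
    (κ : A.Q → Set AP → Set (Moore AP (Oe ∪ Oc) Op))
    (φ : Set (ℕ → Set AP)) (Mp : Moore AP (Oe ∪ Oc) Op) : Prop :=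
  ∀ Mc : Moore AP (Oe ∪ Op) Oc,
    Consistent Oe Oc Op A A.q0 κ Mc Mp → (par Mp Mc).Traces ⊆ φ

/-- `(A, κ)` is most permissive for the plant `M_p` w.r.t. the specification `φ`. -/
def MostPermissiveFor {AP : Type} (Oe Oc Op : Set AP) (A : DSA AP)
    (κ : A.Q → Set AP → Set (Moore AP (Oe ∪ Oc) Op))
    (φ : Set (ℕ → Set AP)) (Mp : Moore AP (Oe ∪ Oc) Op) : Prop :=
  ∀ Mc : Moore AP (Oe ∪ Op) Oc,
    (par Mp Mc).Traces ⊆ φ → Consistent Oe Oc Op A A.q0 κ Mc Mp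

/-- `X` is a safe controllable region of the safety game of `A` and `M_p`:
`X ⊆ F × S^p`, and from every `(q,s) ∈ X` some controller output `α ⊆ O_c`
keeps the game in `X` for every environment output `β ⊆ O_e`. -/
def WinStep {AP : Type} (Oe Oc Op : Set AP) (A : DSA AP)
    (Mp : Moore AP (Oe ∪ Oc) Op) (X : Set (A.Q × Mp.S)) : Prop :=
  (∀ p ∈ X, p.1 ∈ A.F) ∧
    ∀ p ∈ X, ∃ α ⊆ Oc, ∀ β ⊆ Oe,
      (A.δ p.1 (α ∪ β ∪ Mp.out p.2), Mp.tr p.2 (α ∪ β)) ∈ X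

/-- The winning region of the safety game of `A` and `M_p`: the largest
(safe controllable) set `X` with `WinStep`, i.e. the union of all of them. -/
def Win {AP : Type} (Oe Oc Op : Set AP) (A : DSA AP)
    (Mp : Moore AP (Oe ∪ Oc) Op) : Set (A.Q × Mp.S) :=
  ⋃₀ { X | WinStep Oe Oc Op A Mp X }

/-- The exact prophecy annotation `κ*` of `A`: all plants for which some
controller with initial output `α` keeps every run of `A` from `q` inside `F`. -/
def κStar {AP : Type} (Oe Oc Op : Set AP) (A : DSA AP) (q : A.Q) (α : Set AP) :
    Set (Moore AP (Oe ∪ Oc) Op) :=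
  { Mp | ∃ Mc : Moore AP (Oe ∪ Op) Oc, Mc.out Mc.s0 = α ∧ SafeRuns A q (par Mp Mc) }

/-- `Add_{M_p}(q, α)`: the residual plants `M_p(s)` such that `q ∈ F` and output `α`
leads into the winning region for every environment output `β ⊆ O_e`. -/
def AddSet {AP : Type} (Oe Oc Op : Set AP) (A : DSA AP)
    (Mp : Moore AP (Oe ∪ Oc) Op) (q : A.Q) (α : Set AP) :
    Set (Moore AP (Oe ∪ Oc) Op) :=
  { M | ∃ s : Mp.S, M = Mp.at' s ∧ q ∈ A.F ∧
      ∀ β ⊆ Oe, (A.δ q (α ∪ β ∪ Mp.out s), Mp.tr s (α ∪ β)) ∈ Win Oe Oc Op A Mp }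

/-- `Rem_{M_p}(q, α)`: the residual plants `M_p(s)` such that output `α` leaves the
winning region for some environment output `β ⊆ O_e`. -/
def RemSet {AP : Type} (Oe Oc Op : Set AP) (A : DSA AP)
    (Mp : Moore AP (Oe ∪ Oc) Op) (q : A.Q) (α : Set AP) :
    Set (Moore AP (Oe ∪ Oc) Op) :=
  { M | ∃ s : Mp.S, M = Mp.at' s ∧
      ∃ β ⊆ Oe, (A.δ q (α ∪ β ∪ Mp.out s), Mp.tr s (α ∪ β)) ∉ Win Oe Oc Op A Mp }

/-- Splice the first `i` letters of `γ` with `γ'`. -/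
def splice {AP : Type} (γ γ' : ℕ → Set AP) (i : ℕ) : ℕ → Set AP :=
  fun k => if k < i then γ k else γ' (k - i)

theorem splice_lt {AP : Type} (γ γ' : ℕ → Set AP) {i k : ℕ} (h : k < i) :
    splice γ γ' i k = γ k := by simp [splice, h]

theorem splice_add {AP : Type} (γ γ' : ℕ → Set AP) (i k : ℕ) :
    splice γ γ' i (i + k) = γ' k := by simp [splice]

theorem moore_run_splice_le {AP : Type} {I O : Set AP} (M : Moore AP I O)
    (γ γ' : ℕ → Set AP) (i : ℕ) :
    ∀ k, k ≤ i → M.run (splice γ γ' i) k = M.run γ k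
  | 0, _ => rfl
  | k + 1, h => by
    simp only [Moore.run]
    rw [moore_run_splice_le M γ γ' i k (by omega), splice_lt γ γ' (by omega)]

theorem moore_run_splice_add {AP : Type} {I O : Set AP} (M : Moore AP I O)
    (γ γ' : ℕ → Set AP) (i : ℕ) :
    ∀ k, M.run (splice γ γ' i) (i + k) = (M.at' (M.run γ i)).run γ' k
  | 0 => moore_run_splice_le M γ γ' i i le_rfl
  | k + 1 => by
    show M.tr (M.run (splice γ γ' i) (i + k)) (splice γ γ' i (i + k) ∩ I) = _
    rw [moore_run_splice_add M γ γ' i k, splice_add]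
    rfl

theorem splice_mem_traces {AP : Type} {I O : Set AP} (M : Moore AP I O)
    (γ γ' : ℕ → Set AP) (i : ℕ) (h : γ ∈ M.Traces)
    (h' : γ' ∈ (M.at' (M.run γ i)).Traces) : splice γ γ' i ∈ M.Traces := by
  intro k
  by_cases hk : k < i
  · rw [moore_run_splice_le M γ γ' i k hk.le, splice_lt γ γ' hk]
    exact h k
  · obtain ⟨j, rfl⟩ := Nat.exists_eq_add_of_le (not_lt.mp hk)
    rw [moore_run_splice_add, splice_add]
    exact h' j

theorem dsa_run_splice_le {AP : Type} (A : DSA AP) (q : A.Q)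
    (γ γ' : ℕ → Set AP) (i : ℕ) :
    ∀ k, k ≤ i → A.run q (splice γ γ' i) k = A.run q γ k
  | 0, _ => rfl
  | k + 1, h => by
    simp only [DSA.run]
    rw [dsa_run_splice_le A q γ γ' i k (by omega), splice_lt γ γ' (by omega)]

theorem dsa_run_splice_add {AP : Type} (A : DSA AP) (q : A.Q)
    (γ γ' : ℕ → Set AP) (i : ℕ) :
    ∀ k, A.run q (splice γ γ' i) (i + k) = A.run (A.run q γ i) γ' k
  | 0 => dsa_run_splice_le A q γ γ' i i le_rfl
  | k + 1 => by
    show A.δ (A.run q (splice γ γ' i) (i + k)) (splice γ γ' i (i + k)) = _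
    rw [dsa_run_splice_add A q γ γ' i k, splice_add]
    rfl

theorem par_run_swap {AP : Type} {I1 O1 I2 O2 : Set AP} (M1 : Moore AP I1 O1)
    (M2 : Moore AP I2 O2) (γ : ℕ → Set AP) :
    ∀ k, (par M1 M2).run γ k = (((par M2 M1).run γ k).2, ((par M2 M1).run γ k).1)
  | 0 => rfl
  | k + 1 => by
    simp only [Moore.run]
    rw [par_run_swap M1 M2 γ k]
    simp only [par, Set.union_comm I1 I2, Set.union_comm O1 O2]

theorem par_traces_swap {AP : Type} {I1 O1 I2 O2 : Set AP} (M1 : Moore AP I1 O1)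
    (M2 : Moore AP I2 O2) (γ : ℕ → Set AP) (h : γ ∈ (par M1 M2).Traces) :
    γ ∈ (par M2 M1).Traces := by
  intro k
  have hk := h k
  rw [par_run_swap] at hk
  have e : γ k ∩ (O2 ∪ O1) = γ k ∩ (O1 ∪ O2) := by rw [Set.union_comm]
  exact e.trans (hk.trans (Set.union_comm _ _))

/-- Forward-completeness of the exact prophecy annotation:
if a plant satisfies the prophecy `κ*(q, α)`, then some controller is
consistent with `(A(q), κ*)` w.r.t. this plant. -/
theorem κStar_forward_complete
    {AP : Type} [Finite AP] (Oe Oc Op : Set AP)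
    (hec : Disjoint Oe Oc) (hep : Disjoint Oe Op) (hcp : Disjoint Oc Op)
    (hcov : Oe ∪ Oc ∪ Op = Set.univ)
    (A : DSA AP) (Mp : Moore AP (Oe ∪ Oc) Op) (q : A.Q) (α : Set AP) (hα : α ⊆ Oc)
    (h : Mp ∈ κStar Oe Oc Op A q α) :
    ∃ Mc : Moore AP (Oe ∪ Op) Oc,
      Consistent Oe Oc Op A q (κStar Oe Oc Op A) Mc Mp := by
  obtain ⟨Mc, -, hs⟩ := h
  refine ⟨Mc, fun γ hγ i => ⟨Mc.at' ((par Mc Mp).run γ i).1, rfl, ?_⟩⟩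
  rw [par_run_swap Mc Mp γ i]
  intro γ' hγ' k
  have := hs _ (splice_mem_traces (par Mp Mc) γ γ' i (par_traces_swap _ _ γ hγ) hγ') (i + k)
  rwa [dsa_run_splice_add] at this
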